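/- Let X be a separable Banach space and let T : X → X be a hypercyclic bounded linear operator with c(T) > 0. Then there is a comeager set of vectors x ∈ X for which there exists a set D_x ⊆ ℕ with upper density at least c(T) such that ‖T^i x‖ → 0 as i → ∞ along D_x. -/

import Mathlib

open MeasureTheory Filter Topology Set Metric

/-- The upper density of a set of natural numbers:
`limsup_{N→∞} #(A ∩ [1,N]) / N`. -/
noncomputable def upperDensity (A : Set ℕ) : ℝ :=
  Filter.limsup (fun N : ℕ => (Nat.card ↥(A ∩ Set.Icc 1 N) : ℝ) / N) Filter.atTop

/-- `x` is a hypercyclic point for `T`: its orbit is dense. -/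
def HypPt {X : Type*} [TopologicalSpace X] (T : X → X) (x : X) : Prop :=
  Dense (Set.range fun n : ℕ => T^[n] x)

/-- The parameter `c(T)`:
`c(T) = sup_{R>0} sup_{x ∈ HC(T)} upperDensity {n | T^[n] x ∈ B̄(0,R)}`. -/
noncomputable def cConst {X : Type*} [NormedAddCommGroup X] (T : X → X) : ℝ :=
  sSup {c : ℝ | ∃ R : ℝ, 0 < R ∧ ∃ x : X, HypPt T x ∧
    c = upperDensity {n : ℕ | T^[n] x ∈ Metric.closedBall 0 R}}

/-!
If the orbit of `y` visits the bounded set `S` at times of upper density at least `b`, then for a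
small scalar `a ≠ 0` every vector `a • T^k y` visits a given neighbourhood of `0` at times of upper
density at least `b`: scaling shrinks `S`, and a shift of time does not change upper densities.
These vectors are dense when `y` is hypercyclic, and visiting an open set with upper density at
least `c` is a `Gδ` condition when stated through finite windows, so generic vectors visit every
neighbourhood of `0` with upper density at least `c(T)`. A diagonal argument, concatenating ever
longer windows of visit times to ever smaller neighbourhoods, yields one set `D` for all of them.
-/

open scoped Pointwise

section UpperDensity

variable {A : Set ℕ} {c : ℝ}

lemma ncard_inter_Icc_le (A : Set ℕ) (n : ℕ) : (A ∩ Icc 1 n).ncard ≤ n := by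
  simpa using Set.ncard_le_ncard (inter_subset_right (s := A)) (Set.finite_Icc 1 n)

lemma ncard_inter_Icc_le_add (A : Set ℕ) (m n : ℕ) :
    (A ∩ Icc 1 n).ncard ≤ m + (A ∩ Ioc m n).ncard := by
  have hsub : A ∩ Icc 1 n ⊆ Icc 1 m ∪ A ∩ Ioc m n := by
    rintro i ⟨hi, hi1, hin⟩
    exact (le_or_gt i m).imp (fun h => ⟨hi1, h⟩) (fun h => ⟨hi, h, hin⟩)
  have hfin : (Icc 1 m ∪ A ∩ Ioc m n).Finite :=
    (Set.finite_Icc 1 m).union ((Set.finite_Ioc m n).inter_of_right A)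
  calc (A ∩ Icc 1 n).ncard ≤ (Icc 1 m ∪ A ∩ Ioc m n).ncard := Set.ncard_le_ncard hsub hfin
    _ ≤ (Icc 1 m).ncard + (A ∩ Ioc m n).ncard := Set.ncard_union_le _ _
    _ = m + (A ∩ Ioc m n).ncard := by simp

lemma frequently_mul_lt_ncard_inter_Ioc (h : c < upperDensity A) (m : ℕ) :
    ∃ᶠ n : ℕ in atTop, c * n < (A ∩ Ioc m n).ncard := by
  obtain ⟨a, hca, haA⟩ := exists_between h
  have hfreq : ∃ᶠ n : ℕ in atTop, a < (Nat.card ↥(A ∩ Icc 1 n) : ℝ) / n :=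
    frequently_lt_of_lt_limsup
      (IsCoboundedUnder.of_frequently_ge (a := 0) (Frequently.of_forall fun n => by positivity))
      haA
  have hm : ∀ᶠ n : ℕ in atTop, (m : ℝ) < (a - c) * n :=
    (tendsto_natCast_atTop_atTop.const_mul_atTop (sub_pos.2 hca)).eventually_gt_atTop _
  refine (hfreq.and_eventually (hm.and (eventually_gt_atTop 0))).mono ?_
  rintro n ⟨hn, hmn, hn0⟩
  rw [lt_div_iff₀ (Nat.cast_pos.2 hn0), Nat.card_coe_set_eq] at hn
  have hwindow : ((A ∩ Icc 1 n).ncard : ℝ) ≤ m + (A ∩ Ioc m n).ncard :=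
    mod_cast ncard_inter_Icc_le_add A m n
  linarith

lemma frequently_mul_lt_ncard_inter_Icc (h : c < upperDensity A) :
    ∃ᶠ n : ℕ in atTop, c * n < (A ∩ Icc 1 n).ncard :=
  frequently_mul_lt_ncard_inter_Ioc h 0

lemma le_upperDensity_of_frequently (h : ∃ᶠ n : ℕ in atTop, c * n ≤ (A ∩ Icc 1 n).ncard) :
    c ≤ upperDensity A := by
  refine le_limsup_of_frequently_le ?_ (isBoundedUnder_of ⟨1, fun n => ?_⟩)
  · refine (h.and_eventually (eventually_gt_atTop 0)).mono fun n ⟨hn, hn0⟩ => ?_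
    rwa [le_div_iff₀ (Nat.cast_pos.2 hn0), Nat.card_coe_set_eq]
  · rw [Nat.card_coe_set_eq]
    exact div_le_one_of_le₀ (mod_cast ncard_inter_Icc_le A n) n.cast_nonneg

lemma upperDensity_le_of_add_mem {B : Set ℕ} (k : ℕ) (h : ∀ i, i + k ∈ A → i ∈ B) :
    upperDensity A ≤ upperDensity B := by
  refine le_of_forall_lt_imp_le_of_dense fun c hc => le_upperDensity_of_frequently ?_
  refine (frequently_mul_lt_ncard_inter_Ioc hc k).mono fun n hn => hn.le.trans ?_
  have hcard : (A ∩ Ioc k n).ncard ≤ (B ∩ Icc 1 n).ncard := by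
    refine Set.ncard_le_ncard_of_injOn (· - k) ?_ ?_ ((Set.finite_Icc 1 n).inter_of_right B)
    · rintro i ⟨hi, hki, hin⟩
      exact ⟨h _ (by rwa [Nat.sub_add_cancel hki.le]), by grind⟩
    · rintro i ⟨-, hki, -⟩ j ⟨-, hkj, -⟩ hij
      grind
  exact_mod_cast hcard

lemma exists_upperDensity_ge_of_antitone {A : ℕ → Set ℕ} (hA : Antitone A)
    (hc : ∀ k, c ≤ upperDensity (A k)) :
    ∃ D : Set ℕ, c ≤ upperDensity D ∧ ∀ k, ∀ᶠ i in atTop ⊓ 𝓟 D, i ∈ A k := by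
  obtain ⟨u, -, huc, hu⟩ := exists_seq_strictMono_tendsto c
  have hwindow : ∀ k m, ∃ n > m, u k * n < (A k ∩ Ioc m n).ncard := fun k m =>
    frequently_atTop'.1 (frequently_mul_lt_ncard_inter_Ioc ((huc k).trans_le (hc k)) m) m
  choose next hlt hcard using hwindow
  let n : ℕ → ℕ := fun k => Nat.rec 0 next k
  have hn : StrictMono n := strictMono_nat_of_lt_succ fun k => hlt k (n k)
  refine ⟨⋃ k, A k ∩ Ioc (n k) (n (k + 1)), ?_, fun K => ?_⟩
  · refine le_of_forall_lt_imp_le_of_dense fun b hb => le_upperDensity_of_frequently ?_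
    refine (hn.tendsto_atTop.comp (tendsto_add_atTop_nat 1)).frequently (Eventually.frequently ?_)
    filter_upwards [hu.eventually_const_le hb] with k hk
    have hsub : A k ∩ Ioc (n k) (n (k + 1)) ⊆
        (⋃ k, A k ∩ Ioc (n k) (n (k + 1))) ∩ Icc 1 (n (k + 1)) :=
      fun i hi => ⟨mem_iUnion_of_mem k hi, (Nat.zero_le _).trans_lt hi.2.1, hi.2.2⟩
    calc b * n (k + 1) ≤ u k * n (k + 1) := by gcongr
      _ ≤ (A k ∩ Ioc (n k) (n (k + 1))).ncard := (hcard k (n k)).le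
      _ ≤ _ := mod_cast Set.ncard_le_ncard hsub ((Set.finite_Icc 1 _).inter_of_right _)
  · rw [eventually_inf_principal]
    filter_upwards [eventually_gt_atTop (n K)] with i hi hiD
    obtain ⟨k, hik, -, hin⟩ := mem_iUnion.1 hiD
    exact hA (Nat.lt_succ_iff.1 (hn.lt_iff_lt.1 (hi.trans_le hin))) hik

lemma exists_tendsto_inf_principal_of_le_upperDensity {α : Type*} {l : Filter α} {s : ℕ → Set α}
    (hs : l.HasAntitoneBasis s) {f : ℕ → α} (hc : ∀ k, c ≤ upperDensity (f ⁻¹' s k)) :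
    ∃ D : Set ℕ, c ≤ upperDensity D ∧ Tendsto f (atTop ⊓ 𝓟 D) l := by
  obtain ⟨D, hD, hmem⟩ :=
    exists_upperDensity_ge_of_antitone (fun _ _ h => preimage_mono (hs.antitone h)) hc
  exact ⟨D, hD, hs.tendsto_right_iff.2 fun k _ => hmem k⟩

end UpperDensity

/-- The visit times `N_T(x, U) = {n | T^n x ∈ U}` of the orbit of `x` to `U`. -/
def visitTimes {X : Type*} (T : X → X) (x : X) (U : Set X) : Set ℕ :=
  (fun n => T^[n] x) ⁻¹' U

section Generic

variable {X : Type*} [TopologicalSpace X] {T : X → X} {U : Set X}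

lemma lowerSemicontinuous_ncard_visitTimes_inter (hT : Continuous T) (hU : IsOpen U) {s : Set ℕ}
    (hs : s.Finite) : LowerSemicontinuous fun x => ((visitTimes T x U ∩ s).ncard : ℝ) := by
  intro x r hr
  have hvisit : ∀ᶠ z in 𝓝 x, ∀ i ∈ visitTimes T x U ∩ s, T^[i] z ∈ U :=
    (eventually_all_finite (hs.inter_of_right _)).2 fun i hi =>
      (hT.iterate i).continuousAt.eventually_mem (hU.mem_nhds hi.1)
  filter_upwards [hvisit] with z hz
  have hsub : visitTimes T x U ∩ s ⊆ visitTimes T z U ∩ s := fun i hi => ⟨hz i hi, hi.2⟩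
  exact hr.trans_le (Nat.cast_le.2 (Set.ncard_le_ncard hsub (hs.inter_of_right _)))

lemma isGδ_setOf_frequently {p : ℕ → X → Prop} (hp : ∀ n, IsOpen {x | p n x}) :
    IsGδ {x | ∃ᶠ n in atTop, p n x} := by
  have hset : {x | ∃ᶠ n in atTop, p n x} = ⋂ N, ⋃ n ≥ N, {x | p n x} := by
    ext x
    simp [frequently_atTop]
  rw [hset]
  exact IsGδ.iInter_of_isOpen fun N => isOpen_biUnion fun n _ => hp n

lemma eventually_residual_le_upperDensity_visitTimes (hT : Continuous T) (hU : IsOpen U) {c : ℝ}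
    (hd : ∀ b < c, Dense {x | b < upperDensity (visitTimes T x U)}) :
    ∀ᶠ x in residual X, c ≤ upperDensity (visitTimes T x U) := by
  obtain ⟨u, -, huc, hu⟩ := exists_seq_strictMono_tendsto c
  have hfreq : ∀ᶠ x in residual X, ∀ k, ∃ᶠ n : ℕ in atTop,
      u k * n < (visitTimes T x U ∩ Icc 1 n).ncard :=
    eventually_countable_forall.2 fun k => residual_of_dense_Gδ
      (isGδ_setOf_frequently fun n =>
        (lowerSemicontinuous_ncard_visitTimes_inter hT hU (Set.finite_Icc 1 n)).isOpen_preimage _)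
      ((hd (u k) (huc k)).mono fun _ hx => frequently_mul_lt_ncard_inter_Icc hx)
  filter_upwards [hfreq] with x hx
  exact le_of_tendsto' hu fun k => le_upperDensity_of_frequently ((hx k).mono fun _ hn => hn.le)

end Generic

lemma dense_upperDensity_visitTimes_le {𝕜 X F : Type*} [NontriviallyNormedField 𝕜]
    [AddCommGroup X] [Module 𝕜 X] [TopologicalSpace X] [ContinuousConstSMul 𝕜 X]
    [FunLike F X X] [MulActionHomClass F 𝕜 X X] (T : F) {y : X} (hy : HypPt T y) {S U : Set X}
    (hS : Bornology.IsVonNBounded 𝕜 S) (hU : U ∈ 𝓝 0) :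
    Dense {x | upperDensity (visitTimes T y S) ≤ upperDensity (visitTimes T x U)} := by
  have hsmall : ∀ᶠ a in 𝓝[≠] (0 : 𝕜), a • S ⊆ U :=
    nhdsWithin_le_nhds (tendsto_smallSets_iff.1 hS.tendsto_smallSets_nhds U hU)
  obtain ⟨a, haS, ha : a ≠ 0⟩ := (hsmall.and self_mem_nhdsWithin).exists
  have hdense : DenseRange fun k : ℕ => a • T^[k] y :=
    (Homeomorph.smulOfNeZero a ha).surjective.denseRange.comp hy (continuous_const_smul a)
  refine hdense.mono ?_
  rintro _ ⟨k, rfl⟩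
  refine upperDensity_le_of_add_mem k fun i hi => ?_
  have hcomm : T^[i] (a • T^[k] y) = a • T^[i + k] y := by
    rw [Function.iterate_add_apply]
    exact Function.Commute.iterate_left (fun x => map_smul T a x) i _
  exact haS (hcomm.symm ▸ smul_mem_smul_set hi : T^[i] (a • T^[k] y) ∈ a • S)

lemma exists_lt_upperDensity_of_lt_cConst {X : Type*} [NormedAddCommGroup X] {T : X → X}
    (hhc : ∃ x, HypPt T x) {b : ℝ} (hb : b < cConst T) :
    ∃ R y, HypPt T y ∧ b < upperDensity (visitTimes T y (closedBall 0 R)) := by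
  obtain ⟨x, hx⟩ := hhc
  obtain ⟨_, ⟨R, -, y, hy, rfl⟩, hlt⟩ :=
    exists_lt_of_lt_csSup (by exact ⟨_, 1, one_pos, x, hx, rfl⟩) hb
  exact ⟨R, y, hy, hlt⟩

section Normed

variable {𝕜 X : Type*} [NontriviallyNormedField 𝕜] [NormedAddCommGroup X] [NormedSpace 𝕜 X]

lemma eventually_residual_cConst_le_upperDensity (T : X →L[𝕜] X) (hhc : ∃ x, HypPt T x)
    {U : Set X} (hU : IsOpen U) (h0 : 0 ∈ U) :
    ∀ᶠ x in residual X, cConst T ≤ upperDensity (visitTimes T x U) := by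
  refine eventually_residual_le_upperDensity_visitTimes T.continuous hU fun b hb => ?_
  obtain ⟨R, y, hy, hlt⟩ := exists_lt_upperDensity_of_lt_cConst hhc hb
  exact (dense_upperDensity_visitTimes_le T hy (NormedSpace.isVonNBounded_closedBall 𝕜 X R)
    (hU.mem_nhds h0)).mono fun _ hx => hlt.trans_le hx

theorem stmt7_general (T : X →L[𝕜] X) (hhc : ∃ x, HypPt T x) :
    {x : X | ∃ D : Set ℕ, cConst T ≤ upperDensity D ∧
      Tendsto (fun i => ‖T^[i] x‖) (atTop ⊓ 𝓟 D) (𝓝 0)} ∈ residual X := by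
  obtain ⟨U, hU, hbasis⟩ := (nhds_basis_opens (0 : X)).exists_antitone_subbasis
  have hvisit : ∀ᶠ x in residual X, ∀ k, cConst T ≤ upperDensity (visitTimes T x (U k)) :=
    eventually_countable_forall.2 fun k =>
      eventually_residual_cConst_le_upperDensity T hhc (hU k).2 (hU k).1
  filter_upwards [hvisit] with x hx
  obtain ⟨D, hD, hlim⟩ := exists_tendsto_inf_principal_of_le_upperDensity hbasis hx
  exact ⟨D, hD, tendsto_zero_iff_norm_tendsto_zero.1 hlim⟩

end Normed

/-- Let `X` be a separable Banach space and `T` a hypercyclic bounded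
linear operator on `X` with `c(T) > 0`. Then there is a comeager set of vectors `x ∈ X`
for which there exists a set `D_x ⊆ ℕ` with upper density at least `c(T)` such that
`‖T^i x‖ → 0` as `i → ∞` along `D_x`. -/
theorem stmt7 {X : Type*} [NormedAddCommGroup X] [NormedSpace ℝ X] [CompleteSpace X]
    [TopologicalSpace.SeparableSpace X] [MeasurableSpace X] [BorelSpace X]
    (T : X →L[ℝ] X) (hhc : ∃ x : X, HypPt (⇑T) x) (hc : 0 < cConst (⇑T)) :
    {x : X | ∃ D : Set ℕ, cConst (⇑T) ≤ upperDensity D ∧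
      Filter.Tendsto (fun i : ℕ => ‖(⇑T)^[i] x‖)
        (Filter.atTop ⊓ Filter.principal D) (nhds 0)} ∈ residual X :=
  stmt7_general T hhc
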